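/- For every natural number n and every forcing condition p = (F_p, T_p, d_p), there exists a forcing condition q = (F_q, T_q, d_q) extending p such that max{1 − μ_τ([T_q]) : τ ∈ F_q} < (1/(n+1)) · min{1 − d_q(τ) : τ ∈ F_q}. -/

import Mathlib

open MeasureTheory

/-- The first `n` bits of `x ∈ 2^ω`, as a string. -/
def seg (x : ℕ → Bool) (n : ℕ) : List Bool := List.ofFn (fun i : Fin n => x i)

/-- The cylinder of a string: all `x ∈ 2^ω` with `σ` as a prefix. -/
def cyl (σ : List Bool) : Set (ℕ → Bool) := {x | seg x σ.length = σ}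

/-- A tree: a set of strings closed under prefixes. -/
def IsTree (T : Set (List Bool)) : Prop :=
  ∀ σ ∈ T, ∀ τ : List Bool, τ <+: σ → τ ∈ T

/-- The paths of a tree: those `x ∈ 2^ω` all of whose prefixes are in `T`. -/
def paths (T : Set (List Bool)) : Set (ℕ → Bool) := {x | ∀ n, seg x n ∈ T}

/-- Relative measure: `μ_τ(A) = 2^{|τ|} · μ(A ∩ ⟦τ⟧)`. -/
noncomputable def relMeasure (μ : Measure (ℕ → Bool)) (τ : List Bool)
    (A : Set (ℕ → Bool)) : ℝ :=
  2 ^ τ.length * (μ (A ∩ cyl τ)).toReal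

/-- A tree is strongly positive if `μ_σ([T]) > 0` for every `σ ∈ T`. -/
def StronglyPositive (μ : Measure (ℕ → Bool)) (T : Set (List Bool)) : Prop :=
  ∀ σ ∈ T, 0 < relMeasure μ σ (paths T)

/-- A lower density function: a nonnegative rational-valued function on a
finite nonempty domain of strings of equal length. -/
structure LDF where
  dom : Finset (List Bool)
  val : List Bool → ℚ
  dom_nonempty : dom.Nonempty
  nonneg : ∀ σ ∈ dom, 0 ≤ val σ
  eq_length : ∀ σ ∈ dom, ∀ τ ∈ dom, σ.length = τ.length

/-- `e` extends `d`: every element of `⟨e⟩` extends an element of `⟨d⟩`,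
every element of `⟨d⟩` has an extension in `⟨e⟩`, and for each `σ ∈ ⟨d⟩`,
`d(σ)·2^{-|σ|} ≤ Σ_{τ ∈ ⟨e⟩, σ ⊑ τ} e(τ)·2^{-|τ|}`. -/
def LDF.Extends (e d : LDF) : Prop :=
  (∀ τ ∈ e.dom, ∃ σ ∈ d.dom, σ <+: τ) ∧
  (∀ σ ∈ d.dom, ∃ τ ∈ e.dom, σ <+: τ) ∧
  ∀ σ ∈ d.dom, d.val σ * (2 : ℚ)⁻¹ ^ σ.length ≤
    ∑ τ ∈ e.dom.filter (fun τ => σ <+: τ), e.val τ * (2 : ℚ)⁻¹ ^ τ.length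

/-- A tree `T` is `d`-dense: `⟨d⟩` is the full level of `T` at the common
length of `⟨d⟩`, and for some rational `ε > 0`, `d(σ) + ε ≤ μ_σ([T])` for
each `σ ∈ ⟨d⟩`. -/
def LDF.DenseIn (d : LDF) (μ : Measure (ℕ → Bool)) (T : Set (List Bool)) : Prop :=
  ∃ ε : ℚ, 0 < ε ∧ (∃ l : ℕ, ∀ σ : List Bool, σ ∈ d.dom ↔ (σ ∈ T ∧ σ.length = l)) ∧
    ∀ σ ∈ d.dom, (d.val σ : ℝ) + (ε : ℝ) ≤ relMeasure μ σ (paths T)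

/-- A forcing condition `(F_p, T_p, d_p)`: a lower density function `d`
(whose domain is `F`), together with an infinite, `d`-dense, strongly
positive tree `T`. -/
structure Cond (μ : Measure (ℕ → Bool)) where
  d : LDF
  T : Set (List Bool)
  tree : IsTree T
  infinite : T.Infinite
  dense : d.DenseIn μ T
  strongPos : StronglyPositive μ T

/-- `q` extends `p`: `d_q` extends `d_p` and `T_q ⊆ T_p`. -/
def Cond.Extends {μ : Measure (ℕ → Bool)} (q p : Cond μ) : Prop :=
  q.d.Extends p.d ∧ q.T ⊆ p.T

/-!
Let `p = (F, T, d)` be a condition, with slack `ε` in its density requirement. By continuity from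
above, the cylinders of the strings in `T ∩ 2^l` exceed `[T]` by arbitrarily little measure once
`l` is large, so by Markov's inequality the strings `τ ∈ T ∩ 2^l` with `μ_τ([T]) ≤ 1 - δ` carry
arbitrarily little measure. Discard them: keep only the part of `T` comparable with some remaining
string of length `l`, and let `d_q` be constantly `1 - η` on those strings, where `η = ε / 2`. Below
each `σ ∈ F` the remaining strings have relative measure at least `d(σ) + η`, and
`(1 - η) (d(σ) + η) ≥ d(σ)` because `d(σ) + η ≤ 1`, so `d_q` extends `d`. Since `η` was fixed before
`δ`, taking `δ` small compared to `η` gives the theorem.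
-/

section Cylinders

variable {x : ℕ → Bool} {σ τ : List Bool} {m n : ℕ}

@[simp]
lemma length_seg (x : ℕ → Bool) (n : ℕ) : (seg x n).length = n := List.length_ofFn

lemma seg_injective (x : ℕ → Bool) : Function.Injective (seg x) :=
  Function.LeftInverse.injective (length_seg x)

lemma seg_prefix_seg (x : ℕ → Bool) (h : m ≤ n) : seg x m <+: seg x n := by
  have take_seg : (seg x n).take m = seg x m :=
    (Fin.ofFn_take_eq_take_ofFn h fun i : Fin n => x i).symm
  exact take_seg ▸ List.take_prefix _ _

@[simp]
lemma mem_cyl_seg (x : ℕ → Bool) (n : ℕ) : x ∈ cyl (seg x n) := by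
  simp [cyl]

lemma seg_eq_of_mem_cyl (hx : x ∈ cyl σ) (hσ : σ.length = n) : seg x n = σ := by
  subst hσ
  exact hx

lemma prefix_seg_of_mem_cyl (hx : x ∈ cyl σ) (hσ : σ.length ≤ n) : σ <+: seg x n := by
  simpa only [seg_eq_of_mem_cyl hx rfl] using seg_prefix_seg x hσ

lemma seg_prefix_of_mem_cyl (hx : x ∈ cyl σ) (hσ : n ≤ σ.length) : seg x n <+: σ := by
  simpa only [seg_eq_of_mem_cyl hx rfl] using seg_prefix_seg x hσ

lemma cyl_subset_cyl (h : σ <+: τ) : cyl τ ⊆ cyl σ := fun x hx =>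
  (List.prefix_of_prefix_length_le (seg_prefix_of_mem_cyl hx h.length_le) h
    (length_seg x _).le).eq_of_length (length_seg x _)

lemma disjoint_cyl (hlen : σ.length = τ.length) (hne : σ ≠ τ) : Disjoint (cyl σ) (cyl τ) :=
  Set.disjoint_left.2 fun _ hσ hτ =>
    hne ((seg_eq_of_mem_cyl hσ hlen).symm.trans (seg_eq_of_mem_cyl hτ rfl))

@[simp]
lemma cyl_nil : cyl [] = Set.univ := by
  simp [cyl, seg]

end Cylinders

section Stages

variable {T : Set (List Bool)}

/-- The clopen set of sequences whose prefix of length `l` lies in `T`. For a tree `T` these sets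
decrease to `paths T`. -/
def stage (T : Set (List Bool)) (l : ℕ) : Set (ℕ → Bool) := {x | seg x l ∈ T}

lemma paths_eq_iInter_stage (T : Set (List Bool)) : paths T = ⋂ l, stage T l := by
  ext x
  simp [paths, stage]

lemma paths_subset_stage (T : Set (List Bool)) (l : ℕ) : paths T ⊆ stage T l := fun _ hx => hx l

lemma IsTree.antitone_stage (hT : IsTree T) : Antitone (stage T) := fun _ _ hmn x hx =>
  hT _ hx _ (seg_prefix_seg x hmn)

lemma measurableSet_stage (T : Set (List Bool)) (l : ℕ) : MeasurableSet (stage T l) := by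
  have measurable_restrict : Measurable fun (x : ℕ → Bool) (i : Fin l) => x i := by fun_prop
  exact measurable_restrict (Set.toFinite {f | List.ofFn f ∈ T}).measurableSet

lemma measurableSet_cyl (σ : List Bool) : MeasurableSet (cyl σ) :=
  measurableSet_stage {σ} σ.length

lemma measurableSet_paths (T : Set (List Bool)) : MeasurableSet (paths T) :=
  paths_eq_iInter_stage T ▸ .iInter (measurableSet_stage T)

lemma IsTree.tendsto_measureReal_stage_diff_paths (hT : IsTree T) (μ : Measure (ℕ → Bool))
    [IsFiniteMeasure μ] :
    Filter.Tendsto (fun l => μ.real (stage T l \ paths T)) Filter.atTop (nhds 0) := by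
  have tendsto_stage :
      Filter.Tendsto (fun l => μ.real (stage T l)) Filter.atTop (nhds (μ.real (paths T))) := by
    rw [paths_eq_iInter_stage]
    exact (ENNReal.tendsto_toReal (measure_ne_top μ _)).comp <| tendsto_measure_iInter_atTop
      (fun l => (measurableSet_stage T l).nullMeasurableSet) hT.antitone_stage
      ⟨0, measure_ne_top μ _⟩
  simp only [fun l => measureReal_sdiff (μ := μ) (paths_subset_stage T l) (measurableSet_paths T)]
  simpa only [sub_self] using tendsto_stage.sub_const (μ.real (paths T))

end Stages

section RelativeMeasure

variable {μ : Measure (ℕ → Bool)} {σ τ : List Bool} {A B : Set (ℕ → Bool)}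

lemma relMeasure_mul_pow (μ : Measure (ℕ → Bool)) (σ : List Bool) (A : Set (ℕ → Bool)) :
    relMeasure μ σ A * 2⁻¹ ^ σ.length = μ.real (A ∩ cyl σ) := by
  rw [relMeasure, mul_right_comm, ← mul_pow]
  simp [Measure.real]

lemma relMeasure_pos_iff : 0 < relMeasure μ σ A ↔ 0 < μ.real (A ∩ cyl σ) :=
  mul_pos_iff_of_pos_left (by positivity)

lemma relMeasure_pos_of_inter_cyl_subset [IsFiniteMeasure μ] (hσ : 0 < relMeasure μ σ A)
    (h : A ∩ cyl σ ⊆ B ∩ cyl τ) : 0 < relMeasure μ τ B :=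
  relMeasure_pos_iff.2 ((relMeasure_pos_iff.1 hσ).trans_le (measureReal_mono h))

lemma nonempty_inter_cyl_of_relMeasure_pos (hσ : 0 < relMeasure μ σ A) :
    (A ∩ cyl σ).Nonempty :=
  nonempty_of_measureReal_ne_zero (relMeasure_pos_iff.1 hσ).ne'

lemma StronglyPositive.infinite {T : Set (List Bool)} (hT : StronglyPositive μ T)
    (hne : T.Nonempty) : T.Infinite := by
  obtain ⟨σ, hσ⟩ := hne
  obtain ⟨x, hx, -⟩ := nonempty_inter_cyl_of_relMeasure_pos (hT σ hσ)
  exact Set.infinite_of_injective_forall_mem (seg_injective x) hx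

/-- `μ` is the fair-coin measure on Cantor space, characterized by its values on cylinders. -/
def IsFairCoin (μ : Measure (ℕ → Bool)) : Prop :=
  ∀ σ : List Bool, μ (cyl σ) = 2⁻¹ ^ σ.length

namespace IsFairCoin

lemma isProbabilityMeasure (hμ : IsFairCoin μ) : IsProbabilityMeasure μ :=
  ⟨by simpa using hμ []⟩

lemma measureReal_cyl (hμ : IsFairCoin μ) (σ : List Bool) : μ.real (cyl σ) = 2⁻¹ ^ σ.length := by
  simp [Measure.real, hμ σ]

lemma relMeasure_le_one (hμ : IsFairCoin μ) (σ : List Bool) (A : Set (ℕ → Bool)) :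
    relMeasure μ σ A ≤ 1 := by
  have := hμ.isProbabilityMeasure
  have hpow : (0 : ℝ) < 2⁻¹ ^ σ.length := by positivity
  refine le_of_mul_le_mul_right ?_ hpow
  rw [relMeasure_mul_pow, one_mul, ← hμ.measureReal_cyl]
  exact measureReal_mono Set.inter_subset_right

lemma mul_pow_le_measureReal_cyl_diff (hμ : IsFairCoin μ) {δ : ℝ} (hA : MeasurableSet A)
    (hσ : relMeasure μ σ A ≤ 1 - δ) : δ * 2⁻¹ ^ σ.length ≤ μ.real (cyl σ \ A) := by
  have := hμ.isProbabilityMeasure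
  have split_cyl := measureReal_inter_add_sdiff (μ := μ) (s := cyl σ) hA
  rw [Set.inter_comm, ← relMeasure_mul_pow, hμ.measureReal_cyl] at split_cyl
  have hmul := mul_le_mul_of_nonneg_right hσ (by positivity : (0 : ℝ) ≤ 2⁻¹ ^ σ.length)
  linarith

end IsFairCoin

end RelativeMeasure

section DenseStrings

variable {μ : Measure (ℕ → Bool)} {T : Set (List Bool)} {l : ℕ} {δ : ℝ} {τ : List Bool}

open Classical in
/-- `T ∩ 2^l`: the strings of length `l` in `T`. -/
noncomputable def level (T : Set (List Bool)) (l : ℕ) : Finset (List Bool) :=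
  {τ ∈ (List.finite_length_eq Bool l).toFinset | τ ∈ T}

open Classical in
/-- The strings `τ ∈ T ∩ 2^l` with `μ_τ([T]) > 1 - δ`, which survive the pruning of `T`. -/
noncomputable def denseLevel (μ : Measure (ℕ → Bool)) (T : Set (List Bool)) (l : ℕ) (δ : ℝ) :
    Finset (List Bool) :=
  {τ ∈ level T l | 1 - δ < relMeasure μ τ (paths T)}

open Classical in
/-- The strings `τ ∈ T ∩ 2^l` with `μ_τ([T]) ≤ 1 - δ`, which are discarded when pruning `T`. -/
noncomputable def sparseLevel (μ : Measure (ℕ → Bool)) (T : Set (List Bool)) (l : ℕ) (δ : ℝ) :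
    Finset (List Bool) :=
  {τ ∈ level T l | ¬ 1 - δ < relMeasure μ τ (paths T)}

@[simp]
lemma mem_level : τ ∈ level T l ↔ τ ∈ T ∧ τ.length = l := by
  simp [level, and_comm]

@[simp]
lemma mem_denseLevel :
    τ ∈ denseLevel μ T l δ ↔ (τ ∈ T ∧ τ.length = l) ∧ 1 - δ < relMeasure μ τ (paths T) := by
  simp [denseLevel]

@[simp]
lemma mem_sparseLevel :
    τ ∈ sparseLevel μ T l δ ↔ (τ ∈ T ∧ τ.length = l) ∧ relMeasure μ τ (paths T) ≤ 1 - δ := by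
  simp [sparseLevel]

lemma coe_denseLevel_subset : (denseLevel μ T l δ : Set (List Bool)) ⊆ T := fun _ hτ =>
  (mem_denseLevel.1 hτ).1.1

lemma length_of_mem_denseLevel (hτ : τ ∈ denseLevel μ T l δ) : τ.length = l :=
  (mem_denseLevel.1 hτ).1.2

lemma paths_inter_cyl_subset_biUnion_level {σ : List Bool} (hσ : σ.length ≤ l) :
    paths T ∩ cyl σ ⊆ ⋃ τ ∈ (level T l).filter (σ <+: ·), cyl τ := by
  rintro x ⟨hx, hxσ⟩
  simp only [Set.mem_iUnion]
  refine ⟨seg x l, ?_, mem_cyl_seg x l⟩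
  simpa using ⟨hx l, prefix_seg_of_mem_cyl hxσ hσ⟩

namespace IsFairCoin

/-- Markov's inequality for `τ ↦ 1 - μ_τ([T])` on `T ∩ 2^l`. -/
lemma mul_sum_sparseLevel_le (hμ : IsFairCoin μ) (T : Set (List Bool)) (l : ℕ) (δ : ℝ) :
    δ * ∑ τ ∈ sparseLevel μ T l δ, 2⁻¹ ^ τ.length ≤ μ.real (stage T l \ paths T) := by
  have := hμ.isProbabilityMeasure
  have disjoint_pieces : (sparseLevel μ T l δ : Set (List Bool)).PairwiseDisjoint
      fun τ => cyl τ \ paths T := by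
    intro σ hσ τ hτ hne
    have hlen : σ.length = τ.length :=
      (mem_sparseLevel.1 hσ).1.2.trans (mem_sparseLevel.1 hτ).1.2.symm
    exact (disjoint_cyl hlen hne).mono Set.sdiff_subset Set.sdiff_subset
  have pieces_subset : ⋃ τ ∈ sparseLevel μ T l δ, cyl τ \ paths T ⊆ stage T l \ paths T := by
    refine Set.iUnion₂_subset fun τ hτ => Set.sdiff_subset_sdiff_left fun x hx => ?_
    obtain ⟨hτT, hτl⟩ := (mem_sparseLevel.1 hτ).1
    rwa [stage, Set.mem_ofPred_eq, seg_eq_of_mem_cyl hx hτl]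
  calc δ * ∑ τ ∈ sparseLevel μ T l δ, 2⁻¹ ^ τ.length
      = ∑ τ ∈ sparseLevel μ T l δ, δ * 2⁻¹ ^ τ.length := Finset.mul_sum ..
    _ ≤ ∑ τ ∈ sparseLevel μ T l δ, μ.real (cyl τ \ paths T) := Finset.sum_le_sum fun τ hτ =>
        hμ.mul_pow_le_measureReal_cyl_diff (measurableSet_paths T) (mem_sparseLevel.1 hτ).2
    _ = μ.real (⋃ τ ∈ sparseLevel μ T l δ, cyl τ \ paths T) :=
        (measureReal_biUnion_finset disjoint_pieces fun τ _ =>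
          (measurableSet_cyl τ).diff (measurableSet_paths T)).symm
    _ ≤ μ.real (stage T l \ paths T) := measureReal_mono pieces_subset

lemma measureReal_paths_inter_cyl_le (hμ : IsFairCoin μ) (T : Set (List Bool)) (δ : ℝ)
    {σ : List Bool} (hσ : σ.length ≤ l) :
    μ.real (paths T ∩ cyl σ) ≤ ∑ τ ∈ denseLevel μ T l δ with σ <+: τ, 2⁻¹ ^ τ.length +
      ∑ τ ∈ sparseLevel μ T l δ, 2⁻¹ ^ τ.length := by
  have := hμ.isProbabilityMeasure
  calc μ.real (paths T ∩ cyl σ)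
      ≤ μ.real (⋃ τ ∈ (level T l).filter (σ <+: ·), cyl τ) :=
        measureReal_mono (paths_inter_cyl_subset_biUnion_level hσ) (measure_ne_top μ _)
    _ ≤ ∑ τ ∈ level T l with σ <+: τ, μ.real (cyl τ) := measureReal_biUnion_finset_le ..
    _ = ∑ τ ∈ denseLevel μ T l δ with σ <+: τ, 2⁻¹ ^ τ.length +
          ∑ τ ∈ sparseLevel μ T l δ with σ <+: τ, 2⁻¹ ^ τ.length := by
        simp only [hμ.measureReal_cyl, denseLevel, sparseLevel, Finset.filter_comm _ (σ <+: ·),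
          Finset.sum_filter_add_sum_filter_not]
    _ ≤ _ := by
        gcongr
        exact Finset.filter_subset _ _

lemma exists_le_sum_denseLevel (hμ : IsFairCoin μ) (hT : IsTree T) (hδ : 0 < δ) {s : ℝ}
    (hs : 0 < s) (l₀ : ℕ) :
    ∃ l, l₀ ≤ l ∧ ∀ σ : List Bool, σ.length ≤ l →
      μ.real (paths T ∩ cyl σ) - s ≤ ∑ τ ∈ denseLevel μ T l δ with σ <+: τ, 2⁻¹ ^ τ.length := by
  have := hμ.isProbabilityMeasure
  obtain ⟨l, hsmall, hl⟩ := ((hT.tendsto_measureReal_stage_diff_paths μ).eventually_lt_const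
    (mul_pos hδ hs) |>.and (Filter.eventually_ge_atTop l₀)).exists
  have sparse_lt : ∑ τ ∈ sparseLevel μ T l δ, (2⁻¹ : ℝ) ^ τ.length < s :=
    lt_of_mul_lt_mul_left ((hμ.mul_sum_sparseLevel_le T l δ).trans_lt hsmall) hδ.le
  refine ⟨l, hl, fun σ hσ => ?_⟩
  linarith [hμ.measureReal_paths_inter_cyl_le T δ hσ]

end IsFairCoin

end DenseStrings

section Pruning

variable {μ : Measure (ℕ → Bool)} {T G : Set (List Bool)} {τ ρ : List Bool}

/-- The part of `T` consisting of the strings comparable with an element of `G`. Pruning `T_p` to a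
set of strings of equal length yields the tree `T_q`. -/
def prune (T G : Set (List Bool)) : Set (List Bool) := {ρ ∈ T | ∃ τ ∈ G, ρ <+: τ ∨ τ <+: ρ}

lemma prune_subset (T G : Set (List Bool)) : prune T G ⊆ T := Set.sep_subset _ _

lemma subset_prune (hG : G ⊆ T) : G ⊆ prune T G := fun τ hτ =>
  ⟨hG hτ, τ, hτ, .inl List.prefix_rfl⟩

lemma IsTree.prune (hT : IsTree T) (G : Set (List Bool)) : IsTree (prune T G) := by
  rintro σ ⟨hσ, τ, hτ, hcomp⟩ ρ hρ
  refine ⟨hT σ hσ ρ hρ, τ, hτ, ?_⟩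
  rcases hcomp with hστ | hτσ
  · exact .inl (hρ.trans hστ)
  · exact List.prefix_or_prefix_of_prefix hρ hτσ

lemma mem_prune_and_length_eq_iff {l : ℕ} (hG : G ⊆ T) (hlen : ∀ τ ∈ G, τ.length = l) :
    ρ ∈ prune T G ∧ ρ.length = l ↔ ρ ∈ G := by
  refine ⟨?_, fun hρ => ⟨subset_prune hG hρ, hlen ρ hρ⟩⟩
  rintro ⟨⟨-, τ, hτ, hρτ | hτρ⟩, hρ⟩
  · exact hρτ.eq_of_length (hρ.trans (hlen τ hτ).symm) ▸ hτ
  · exact hτρ.eq_of_length ((hlen τ hτ).trans hρ.symm) ▸ hτ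

lemma paths_inter_cyl_subset_paths_prune (hτ : τ ∈ G) :
    paths T ∩ cyl τ ⊆ paths (prune T G) := fun _ hx n =>
  ⟨hx.1 n, τ, hτ, (le_total n τ.length).imp (seg_prefix_of_mem_cyl hx.2)
    (prefix_seg_of_mem_cyl hx.2)⟩

lemma paths_prune_inter_cyl (hτ : τ ∈ G) (hτρ : τ <+: ρ) :
    paths (prune T G) ∩ cyl ρ = paths T ∩ cyl ρ :=
  Set.Subset.antisymm
    (Set.inter_subset_inter_left _ fun _ hx n => prune_subset T G (hx n))
    fun _ hx => ⟨paths_inter_cyl_subset_paths_prune hτ ⟨hx.1, cyl_subset_cyl hτρ hx.2⟩, hx.2⟩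

lemma relMeasure_paths_prune (hτ : τ ∈ G) (hτρ : τ <+: ρ) :
    relMeasure μ ρ (paths (prune T G)) = relMeasure μ ρ (paths T) := by
  rw [relMeasure, relMeasure, paths_prune_inter_cyl hτ hτρ]

lemma StronglyPositive.prune [IsFiniteMeasure μ] (hT : StronglyPositive μ T) (hG : G ⊆ T) :
    StronglyPositive μ (prune T G) := by
  rintro ρ ⟨hρ, τ, hτ, hρτ | hτρ⟩
  · exact relMeasure_pos_of_inter_cyl_subset (hT τ (hG hτ)) fun x hx =>
      ⟨paths_inter_cyl_subset_paths_prune hτ hx, cyl_subset_cyl hρτ hx.2⟩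
  · rw [relMeasure_paths_prune hτ hτρ]
    exact hT ρ hρ

end Pruning

section Conditions

variable {μ : Measure (ℕ → Bool)} {T : Set (List Bool)} {l : ℕ} {δ : ℝ}

lemma LDF.exists_prefix_of_mem {d : LDF} (hT : IsTree T) {l₀ : ℕ}
    (hd : ∀ σ, σ ∈ d.dom ↔ σ ∈ T ∧ σ.length = l₀) {τ : List Bool} (hτ : τ ∈ T)
    (hlen : l₀ ≤ τ.length) : ∃ σ ∈ d.dom, σ <+: τ :=
  ⟨τ.take l₀, (hd _).2 ⟨hT τ hτ _ (List.take_prefix _ _), List.length_take_of_le hlen⟩,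
    List.take_prefix _ _⟩

lemma exists_prefix_of_sum_filter_prefix_pos {F : Finset (List Bool)} {σ : List Bool}
    {w : List Bool → ℚ} (h : 0 < ∑ τ ∈ F with σ <+: τ, w τ) : ∃ τ ∈ F, σ <+: τ := by
  obtain ⟨τ, hτ⟩ := Finset.nonempty_of_sum_ne_zero h.ne'
  exact ⟨τ, Finset.mem_filter.1 hτ⟩

lemma LDF.extends_of_val_eq {e d : LDF} {η : ℚ} (hη : 0 < η)
    (hval : ∀ τ ∈ e.dom, e.val τ = 1 - η) (hprefix : ∀ τ ∈ e.dom, ∃ σ ∈ d.dom, σ <+: τ)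
    (hle : ∀ σ ∈ d.dom, d.val σ + η ≤ 1)
    (hmass : ∀ σ ∈ d.dom, (d.val σ + η) * 2⁻¹ ^ σ.length ≤
      ∑ τ ∈ e.dom with σ <+: τ, 2⁻¹ ^ τ.length) :
    e.Extends d := by
  refine ⟨hprefix, fun σ hσ => ?_, fun σ hσ => ?_⟩
  · have hdη : 0 < d.val σ + η := add_pos_of_nonneg_of_pos (d.nonneg σ hσ) hη
    exact exists_prefix_of_sum_filter_prefix_pos (lt_of_lt_of_le (by positivity) (hmass σ hσ))
  · have hdη : d.val σ ≤ (1 - η) * (d.val σ + η) := by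
      nlinarith [hle σ hσ]
    have hη1 : 0 ≤ 1 - η := by linarith [hle σ hσ, d.nonneg σ hσ]
    calc d.val σ * 2⁻¹ ^ σ.length
        ≤ (1 - η) * (d.val σ + η) * 2⁻¹ ^ σ.length := by gcongr
      _ = (1 - η) * ((d.val σ + η) * 2⁻¹ ^ σ.length) := mul_assoc ..
      _ ≤ (1 - η) * ∑ τ ∈ e.dom with σ <+: τ, 2⁻¹ ^ τ.length := by
          gcongr
          exact hmass σ hσ
      _ = ∑ τ ∈ e.dom with σ <+: τ, e.val τ * 2⁻¹ ^ τ.length := by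
          rw [Finset.mul_sum]
          exact Finset.sum_congr rfl fun τ hτ => by rw [hval τ (Finset.mem_filter.1 hτ).1]

/-- The condition obtained from a strongly positive tree `T` by keeping only the part of `T`
comparable with a string `τ ∈ T ∩ 2^l` with `μ_τ([T]) > 1 - δ`. Its lower density function has the
constant value `r` on those strings. -/
noncomputable def Cond.ofDenseLevel [IsFiniteMeasure μ] (hT : IsTree T)
    (hpos : StronglyPositive μ T) (hne : (denseLevel μ T l δ).Nonempty) (r : ℚ) (hr0 : 0 ≤ r)
    (hr : r < 1 - δ) : Cond μ where
  d :=
    { dom := denseLevel μ T l δ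
      val := fun _ => r
      dom_nonempty := hne
      nonneg := fun _ _ => hr0
      eq_length := fun _ hσ _ hτ =>
        (length_of_mem_denseLevel hσ).trans (length_of_mem_denseLevel hτ).symm }
  T := prune T (denseLevel μ T l δ)
  tree := hT.prune _
  infinite := (hpos.prune coe_denseLevel_subset).infinite <|
    hne.to_set.mono (subset_prune coe_denseLevel_subset)
  strongPos := hpos.prune coe_denseLevel_subset
  dense := by
    obtain ⟨s, hrs, hs⟩ := exists_rat_btwn hr
    refine ⟨s - r, sub_pos.2 (mod_cast hrs), ⟨l, fun σ => ?_⟩, fun τ hτ => ?_⟩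
    · exact (mem_prune_and_length_eq_iff coe_denseLevel_subset fun _ =>
        length_of_mem_denseLevel).symm
    · rw [relMeasure_paths_prune hτ List.prefix_rfl]
      push_cast
      linarith [(mem_denseLevel.1 hτ).2]

lemma Cond.exists_extends_of_le_sum_denseLevel [IsFiniteMeasure μ] (p : Cond μ) {l₀ : ℕ}
    (hl₀ : ∀ σ, σ ∈ p.d.dom ↔ σ ∈ p.T ∧ σ.length = l₀) (hl : l₀ ≤ l) {η : ℚ} (hη : 0 < η)
    (hδ : δ < η) (hle : ∀ σ ∈ p.d.dom, p.d.val σ + η ≤ 1)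
    (hmass : ∀ σ ∈ p.d.dom, (p.d.val σ + η) * 2⁻¹ ^ σ.length ≤
      ∑ τ ∈ denseLevel μ p.T l δ with σ <+: τ, 2⁻¹ ^ τ.length) :
    ∃ q : Cond μ, q.Extends p ∧
      ∀ τ ∈ q.d.dom, q.d.val τ = 1 - η ∧ 1 - δ < relMeasure μ τ (paths q.T) := by
  obtain ⟨σ, hσ⟩ := p.d.dom_nonempty
  have hσ0 : 0 ≤ p.d.val σ := p.d.nonneg σ hσ
  obtain ⟨τ₀, hτ₀, -⟩ := exists_prefix_of_sum_filter_prefix_pos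
    (lt_of_lt_of_le (by positivity) (hmass σ hσ))
  let q : Cond μ := .ofDenseLevel p.tree p.strongPos ⟨τ₀, hτ₀⟩ (1 - η)
    (by linarith [hle σ hσ]) (by push_cast; linarith)
  have q_prefix : ∀ τ ∈ q.d.dom, ∃ σ ∈ p.d.dom, σ <+: τ := fun τ hτ =>
    LDF.exists_prefix_of_mem p.tree hl₀ (coe_denseLevel_subset hτ)
      (hl.trans_eq (length_of_mem_denseLevel hτ).symm)
  refine ⟨q, ⟨LDF.extends_of_val_eq hη (fun _ _ => rfl) q_prefix hle hmass, prune_subset _ _⟩,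
    fun τ hτ => ⟨rfl, ?_⟩⟩
  exact (mem_denseLevel.1 hτ).2.trans_eq (relMeasure_paths_prune hτ List.prefix_rfl).symm

lemma IsFairCoin.exists_extends_val_eq (hμ : IsFairCoin μ) (p : Cond μ) :
    ∃ η : ℚ, 0 < η ∧ ∀ δ : ℝ, 0 < δ → δ < η → ∃ q : Cond μ, q.Extends p ∧
      ∀ τ ∈ q.d.dom, q.d.val τ = 1 - η ∧ 1 - δ < relMeasure μ τ (paths q.T) := by
  have := hμ.isProbabilityMeasure
  obtain ⟨ε, hε, ⟨l₀, hl₀⟩, hdense⟩ := p.dense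
  have val_add_le_one : ∀ σ ∈ p.d.dom, p.d.val σ + ε ≤ 1 := fun σ hσ =>
    mod_cast (hdense σ hσ).trans (hμ.relMeasure_le_one σ (paths p.T))
  refine ⟨ε / 2, half_pos hε, fun δ hδ hδε => ?_⟩
  obtain ⟨l, hl, hsum⟩ := hμ.exists_le_sum_denseLevel p.tree hδ
    (s := ε / 2 * 2⁻¹ ^ l₀) (by positivity) l₀
  refine p.exists_extends_of_le_sum_denseLevel hl₀ hl (half_pos hε) hδε
    (fun σ hσ => by linarith [val_add_le_one σ hσ]) fun σ hσ => ?_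
  have hσl : σ.length = l₀ := ((hl₀ σ).1 hσ).2
  have hmass : ((p.d.val σ : ℝ) + ε / 2) * 2⁻¹ ^ σ.length ≤
      ∑ τ ∈ denseLevel μ p.T l δ with σ <+: τ, 2⁻¹ ^ τ.length :=
    calc ((p.d.val σ : ℝ) + ε / 2) * 2⁻¹ ^ σ.length
        = (p.d.val σ + ε) * 2⁻¹ ^ σ.length - ε / 2 * 2⁻¹ ^ l₀ := by
          rw [hσl]
          ring
      _ ≤ relMeasure μ σ (paths p.T) * 2⁻¹ ^ σ.length - ε / 2 * 2⁻¹ ^ l₀ := by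
          gcongr
          exact hdense σ hσ
      _ = μ.real (paths p.T ∩ cyl σ) - ε / 2 * 2⁻¹ ^ l₀ := by rw [relMeasure_mul_pow]
      _ ≤ ∑ τ ∈ denseLevel μ p.T l δ with σ <+: τ, 2⁻¹ ^ τ.length := hsum σ (hσl.trans_le hl)
  rw [← Rat.cast_le (K := ℝ)]
  push_cast
  exact hmass

end Conditions

/-- **Condensation.**
For every `n` and every forcing condition `p = (F_p, T_p, d_p)`, there is a
condition `q = (F_q, T_q, d_q)` extending `p` with
`max{1 − μ_τ([T_q]) : τ ∈ F_q} < (1/(n+1)) · min{1 − d_q(τ) : τ ∈ F_q}`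
(stated elementwise: for all `τ, τ' ∈ F_q`).
(`μ` is the fair-coin measure, characterized by its values on cylinders.) -/
theorem condensation (μ : Measure (ℕ → Bool))
    (hμ : ∀ σ : List Bool, μ (cyl σ) = (2 : ENNReal)⁻¹ ^ σ.length)
    (n : ℕ) (p : Cond μ) :
    ∃ q : Cond μ, q.Extends p ∧
      ∀ τ ∈ q.d.dom, ∀ τ' ∈ q.d.dom,
        1 - relMeasure μ τ (paths q.T) <
          (1 / (n + 1) : ℝ) * (1 - (q.d.val τ' : ℝ)) := by
  obtain ⟨η, hη, exists_extends⟩ := IsFairCoin.exists_extends_val_eq hμ p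
  have hηR : (0 : ℝ) < η := mod_cast hη
  have hδη : (η / (n + 2) : ℝ) < η := div_lt_self hηR (by linarith [n.cast_nonneg (α := ℝ)])
  obtain ⟨q, hqp, hq⟩ := exists_extends (η / (n + 2)) (by positivity) hδη
  refine ⟨q, hqp, fun τ hτ τ' hτ' => ?_⟩
  calc 1 - relMeasure μ τ (paths q.T)
      < η / (n + 2) := by linarith [(hq τ hτ).2]
    _ ≤ η / (n + 1) := by gcongr; norm_num
    _ = 1 / (n + 1) * (1 - (q.d.val τ' : ℝ)) := by
        rw [(hq τ' hτ').1]
        push_cast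
        ring
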